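/- Let u, v, h be real numbers with u, v ≥ 0 and h ≥ 1. Then every real number x ≥ 1 satisfying x = u + v·(log x)^h satisfies x < max{2^h·(u^{1/h} + v^{1/h}·log(h^h·v))^h, 2^h·(u^{1/h} + 2e²)^h}. -/

import Mathlib

/-!
Taking `h`-th roots, which is subadditive for `h ≥ 1`, turns `x ≤ u + v (log x)^h` into
`y ≤ u^{1/h} + c log y` for `y = x^{1/h}` and `c = h v^{1/h}`. The tangent line to `log` at `2c`
bounds `c log y` by `y/2 + c log c`, up to a gain of `c (1 - log 2)` that makes the inequality
strict. Absorbing `y/2` on the left gives `y < 2 (u^{1/h} + c log c)`, and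
`c log c = v^{1/h} log (h^h v)`. Hence the first term of the maximum is always a bound.
-/

lemma mul_log_lt_half_add_mul_log {c y : ℝ} (hc : 0 ≤ c) (hy : 0 < y) :
    c * Real.log y < y / 2 + c * Real.log c := by
  rcases hc.eq_or_lt with rfl | hc
  · simpa using hy
  have tangent : Real.log (y / (2 * c)) ≤ y / (2 * c) - 1 :=
    Real.log_le_sub_one_of_pos (by positivity)
  rw [Real.log_div hy.ne' (by positivity), Real.log_mul two_ne_zero hc.ne'] at tangent
  have log_two_lt_one : Real.log 2 < 1 := Real.log_two_lt_d9.trans (by norm_num)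
  calc c * Real.log y < c * (y / (2 * c) + Real.log c) := by gcongr; linarith
    _ = y / 2 + c * Real.log c := by field_simp

lemma rpow_inv_le_add_of_le_add_mul_rpow {x u v t h : ℝ} (hx : 0 ≤ x) (hu : 0 ≤ u)
    (hv : 0 ≤ v) (ht : 0 ≤ t) (hh : 1 ≤ h) (hle : x ≤ u + v * t ^ h) :
    x ^ h⁻¹ ≤ u ^ h⁻¹ + v ^ h⁻¹ * t := by
  have hth : 0 ≤ t ^ h := Real.rpow_nonneg ht h
  calc x ^ h⁻¹ ≤ (u + v * t ^ h) ^ h⁻¹ := by gcongr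
    _ ≤ u ^ h⁻¹ + (v * t ^ h) ^ h⁻¹ :=
      Real.rpow_add_le_add_rpow hu (mul_nonneg hv hth) (by positivity) (inv_le_one_of_one_le₀ hh)
    _ = u ^ h⁻¹ + v ^ h⁻¹ * t := by
      rw [Real.mul_rpow hv hth, Real.rpow_rpow_inv ht (by positivity)]

lemma mul_rpow_inv_mul_log {v h : ℝ} (hv : 0 ≤ v) (hh : 0 < h) :
    h * v ^ h⁻¹ * Real.log (h * v ^ h⁻¹) = v ^ h⁻¹ * Real.log (h ^ h * v) := by
  rcases hv.eq_or_lt with rfl | hv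
  · simp [Real.zero_rpow (inv_ne_zero hh.ne')]
  have rpow_eq : (h * v ^ h⁻¹) ^ h = h ^ h * v := by
    rw [Real.mul_rpow hh.le (by positivity), Real.rpow_inv_rpow hv.le hh.ne']
  rw [← rpow_eq, Real.log_rpow (by positivity)]
  ring

-- At `v = 0` the product `v ^ (1 / h) * log (h ^ h * v)` is `0`, its limit as `v → 0⁺`.
theorem petho_de_weger_general {u v h x : ℝ} (hu : 0 ≤ u) (hv : 0 ≤ v) (hh : 1 ≤ h)
    (hx : 1 ≤ x) (hle : x ≤ u + v * (Real.log x) ^ h) :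
    x < (2 : ℝ) ^ h * (u ^ (1 / h) + v ^ (1 / h) * Real.log (h ^ h * v)) ^ h := by
  have hh₀ : 0 < h := by positivity
  have hx₀ : 0 < x := by positivity
  have hy : 0 < x ^ h⁻¹ := by positivity
  rw [one_div, ← mul_rpow_inv_mul_log hv hh₀]
  set c := h * v ^ h⁻¹ with hc
  have root_le : x ^ h⁻¹ ≤ u ^ h⁻¹ + c * Real.log (x ^ h⁻¹) := by
    have log_root : c * Real.log (x ^ h⁻¹) = v ^ h⁻¹ * Real.log x := by
      rw [hc, Real.log_rpow hx₀]
      field_simp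
    rw [log_root]
    exact rpow_inv_le_add_of_le_add_mul_rpow hx₀.le hu hv (Real.log_nonneg hx) hh hle
  have root_lt : x ^ h⁻¹ < 2 * (u ^ h⁻¹ + c * Real.log c) := by
    linarith [mul_log_lt_half_add_mul_log (c := c) (by positivity) hy]
  rw [← Real.mul_rpow zero_le_two (by linarith)]
  exact (Real.rpow_inv_lt_iff_of_pos hx₀.le (hy.trans root_lt).le hh₀).mp root_lt

/-- Pethő–de Weger: if `u, v ≥ 0`, `h ≥ 1` and `x ≥ 1` satisfies
`x = u + v·(log x)^h`, then
`x < max {2^h·(u^{1/h} + v^{1/h}·log(h^h·v))^h, 2^h·(u^{1/h} + 2e²)^h}`. -/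
theorem petho_de_weger (u v h : ℝ) (hu : 0 ≤ u) (hv : 0 ≤ v) (hh : 1 ≤ h)
    (x : ℝ) (hx : 1 ≤ x) (heq : x = u + v * (Real.log x) ^ h) :
    x < max ((2 : ℝ) ^ h * (u ^ (1 / h) + v ^ (1 / h) * Real.log (h ^ h * v)) ^ h)
            ((2 : ℝ) ^ h * (u ^ (1 / h) + 2 * Real.exp 2) ^ h) :=
  lt_max_of_lt_left (petho_de_weger_general hu hv hh hx heq.le)
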